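/- If Γ ⊢ M is derivable, M is constructed from variables and blocks of the form ((…((π_{a₁}∘π_{a₂})∘…)∘π_{a_m})∘π_b)∘b (m ≥ 0) using only application and abstraction, then either M is pure (contains no such block) or one of the reduction rules α₁ (on the term M) or α₂ (on the judgement Γ ⊢ M) is applicable. -/

import Mathlib

/- Named terms and substitutions of the λπ-calculus. Variables are natural numbers. -/
mutual
inductive Tm : Type
  | var : ℕ → Tm
  | app : Tm → Tm → Tm
  | lam : ℕ → Tm → Tm
  | clos : Subst → Tm → Tm
inductive Subst : Type
  | id : Subst
  | pi : ℕ → Subst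
  | cons : Subst → Tm → ℕ → Subst
  | comp : Subst → Subst → Subst
end

/- Contexts are lists of variables; the head of the list is the *rightmost* variable,
so the context `Γ, a` of the paper is `a :: Γ`. -/
mutual
/-- `WfTm Γ M` is the judgement `Γ ⊢ M`. -/
inductive WfTm : List ℕ → Tm → Prop
  | var (Γ : List ℕ) (a : ℕ) : WfTm (a :: Γ) (.var a)
  | weak {Γ : List ℕ} {a : ℕ} (b : ℕ) : a ≠ b → WfTm Γ (.var a) → WfTm (b :: Γ) (.var a)
  | app {Γ M N} : WfTm Γ M → WfTm Γ N → WfTm Γ (.app M N)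
  | lam {Γ a M} : WfTm (a :: Γ) M → WfTm Γ (.lam a M)
  | clos {Γ s Δ M} : WfSub Γ s Δ → WfTm Δ M → WfTm Γ (.clos s M)
/-- `WfSub Γ s Δ` is the judgement `Γ ⊢ s ▷ Δ`. -/
inductive WfSub : List ℕ → Subst → List ℕ → Prop
  | id (Γ) : WfSub Γ .id Γ
  | pi (Γ a) : WfSub (a :: Γ) (.pi a) Γ
  | cons {Γ s Δ N} (a) : WfSub Γ s Δ → WfTm Γ N → WfSub Γ (.cons s N a) (a :: Δ)
  | comp {Γ s Δ q Θ} : WfSub Γ s Δ → WfSub Δ q Θ → WfSub Γ (.comp s q) Θ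
end

/-- The operator `O_{λa}` on sequences of finite sets (sequences are 0-indexed:
index `n` corresponds to the paper's index `n+1`). -/
def Olam (a : ℕ) (A : ℕ → Finset ℕ) : ℕ → Finset ℕ
  | 0 => (A 0).erase a ∪ A 1
  | n + 1 => A (n + 2)

/-- The operator `O_π`. -/
def Opi (A : ℕ → Finset ℕ) : ℕ → Finset ℕ
  | 0 => ∅
  | n + 1 => A n

mutual
/-- The free-variable sequence of a term: `FV M n` is the paper's `FV_{n+1}(M)`. -/
def FV : Tm → ℕ → Finset ℕ
  | .var a => fun n => if n = 0 then {a} else ∅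
  | .app M N => fun n => FV M n ∪ FV N n
  | .lam a M => Olam a (FV M)
  | .clos s M => Osub s (FV M)
/-- The operator `O_s` associated with a substitution `s`. -/
def Osub : Subst → (ℕ → Finset ℕ) → (ℕ → Finset ℕ)
  | .id => fun A => A
  | .pi _ => fun A => Opi A
  | .cons s N a => fun A n => Osub s (Olam a A) n ∪ FV N n
  | .comp s q => fun A => Osub s (Osub q A)
end

/-- Iterated abstraction `λΓ.M` (recall the head of the list is the rightmost variable). -/
def lamCtx : List ℕ → Tm → Tm
  | [], M => M
  | a :: Γ, M => lamCtx Γ (.lam a M)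

/-- Free variables of a judgement: `FV(Γ ⊢ M) = FV(λΓ.M)`. -/
def FVJ (Γ : List ℕ) (M : Tm) : ℕ → Finset ℕ := FV (lamCtx Γ M)

/-- Iterated lifting `⇑_Δ(s)`. -/
def Uparrow : List ℕ → Subst → Subst
  | [], s => s
  | a :: Δ, s => .cons (.comp (.pi a) (Uparrow Δ s)) (.var a) a

/- One-step reduction of the λπ-calculus (compatible closure).  The Boolean
parameter tells whether the rule `Beta` is allowed: `StepTm true` is λπ-reduction,
`StepTm false` is σπα-reduction. -/
mutual
inductive StepTm : Bool → Tm → Tm → Prop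
  | beta {a : ℕ} {M N : Tm} :
      StepTm true (.app (.lam a M) N) (.clos (.cons .id N a) M)
  | abs {β : Bool} {s : Subst} {a : ℕ} {M : Tm} :
      StepTm β (.clos s (.lam a M))
        (.lam a (.clos (.cons (.comp (.pi a) s) (.var a) a) M))
  | app {β : Bool} {s : Subst} {M N : Tm} :
      StepTm β (.clos s (.app M N)) (.app (.clos s M) (.clos s N))
  | consVar {β : Bool} {s : Subst} {N : Tm} {a : ℕ} :
      StepTm β (.clos (.cons s N a) (.var a)) N
  | new {β : Bool} {s : Subst} {N : Tm} {a b : ℕ} : a ≠ b →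
      StepTm β (.clos (.cons s N a) (.var b)) (.clos s (.var b))
  | idVar {β : Bool} {a : ℕ} : StepTm β (.clos .id (.var a)) (.var a)
  | clos {β : Bool} {s q : Subst} {M : Tm} :
      StepTm β (.clos s (.clos q M)) (.clos (.comp s q) M)
  | pi1 {β : Bool} {a b : ℕ} : a ≠ b → StepTm β (.clos (.pi a) (.var b)) (.var b)
  | pi2 {β : Bool} {s : Subst} {a b : ℕ} : a ≠ b →
      StepTm β (.clos (.comp s (.pi a)) (.var b)) (.clos s (.var b))
  | alpha1 {β : Bool} {a b : ℕ} {M : Tm} :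
      (∃ i, a ∈ FV (.lam a M) i) → (∀ i, b ∉ FV (.lam a M) i) →
      StepTm β (.lam a M) (.lam b (.clos (.cons (.pi b) (.var b) a) M))
  | lamCong {β : Bool} {a : ℕ} {M₁ M₂ : Tm} :
      StepTm β M₁ M₂ → StepTm β (.lam a M₁) (.lam a M₂)
  | appL {β : Bool} {M₁ M₂ N : Tm} : StepTm β M₁ M₂ → StepTm β (.app M₁ N) (.app M₂ N)
  | appR {β : Bool} {M N₁ N₂ : Tm} : StepTm β N₁ N₂ → StepTm β (.app M N₁) (.app M N₂)
  | closL {β : Bool} {s₁ s₂ : Subst} {M : Tm} :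
      StepSub β s₁ s₂ → StepTm β (.clos s₁ M) (.clos s₂ M)
  | closR {β : Bool} {s : Subst} {M₁ M₂ : Tm} :
      StepTm β M₁ M₂ → StepTm β (.clos s M₁) (.clos s M₂)
inductive StepSub : Bool → Subst → Subst → Prop
  | ass {β : Bool} {s q r : Subst} :
      StepSub β (.comp s (.comp q r)) (.comp (.comp s q) r)
  | idR {β : Bool} {s : Subst} : StepSub β (.comp s .id) s
  | idShift {β : Bool} {a : ℕ} : StepSub β (.comp .id (.pi a)) (.pi a)
  | consShift {β : Bool} {s : Subst} {N : Tm} {a : ℕ} :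
      StepSub β (.comp (.cons s N a) (.pi a)) s
  | map {β : Bool} {s q : Subst} {N : Tm} {a : ℕ} :
      StepSub β (.comp s (.cons q N a)) (.cons (.comp s q) (.clos s N) a)
  | consL {β : Bool} {s₁ s₂ : Subst} {N : Tm} {a : ℕ} :
      StepSub β s₁ s₂ → StepSub β (.cons s₁ N a) (.cons s₂ N a)
  | consR {β : Bool} {s : Subst} {N₁ N₂ : Tm} {a : ℕ} :
      StepTm β N₁ N₂ → StepSub β (.cons s N₁ a) (.cons s N₂ a)
  | compL {β : Bool} {s₁ s₂ q : Subst} :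
      StepSub β s₁ s₂ → StepSub β (.comp s₁ q) (.comp s₂ q)
  | compR {β : Bool} {s q₁ q₂ : Subst} :
      StepSub β q₁ q₂ → StepSub β (.comp s q₁) (.comp s q₂)
end

/-- One-step reduction `⇝` on judgements `Γ ⊢ M`, including the rule `α₂`.
`StepJ true` is λπ, `StepJ false` is σπα. -/
inductive StepJ (β : Bool) : List ℕ × Tm → List ℕ × Tm → Prop
  | step {Γ : List ℕ} {M₁ M₂ : Tm} : StepTm β M₁ M₂ → StepJ β (Γ, M₁) (Γ, M₂)
  | alpha2 {Γ Δ : List ℕ} {a b : ℕ} {M : Tm} :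
      (∃ i, a ∈ FVJ (Δ ++ [a]) M i) → (∀ i, b ∉ FVJ (Δ ++ [a]) M i) →
      StepJ β (Δ ++ a :: Γ, M)
        (Δ ++ b :: Γ, .clos (Uparrow Δ (.cons (.pi b) (.var b) a)) M)

/- Name-free (de Bruijn) terms and substitutions. -/
mutual
inductive NTm : Type
  | one : NTm
  | app : NTm → NTm → NTm
  | lam : NTm → NTm
  | clos : NSub → NTm → NTm
inductive NSub : Type
  | id : NSub
  | pi : NSub
  | cons : NSub → NTm → NSub
  | comp : NSub → NSub → NSub
end

/-- `piIter n` is the left-nested composition of `n+1` copies of `π`. -/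
def piIter : ℕ → NSub
  | 0 => .pi
  | k + 1 => .comp (piIter k) .pi

/-- `dbr n` is the de Bruijn index `n+1̲`: `dbr 0 = 1` and
`dbr (n+1) = ((…(π∘π)∘…)∘π)∘1` with `n+1` occurrences of `π`. -/
def dbr : ℕ → NTm
  | 0 => .one
  | n + 1 => .clos (piIter n) .one

/- One-step reduction of λσ (`NStepTm true`) resp. σ (`NStepTm false`)
on name-free terms/substitutions. -/
mutual
inductive NStepTm : Bool → NTm → NTm → Prop
  | beta {U V : NTm} : NStepTm true (.app (.lam U) V) (.clos (.cons .id V) U)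
  | abs {β : Bool} {u : NSub} {U : NTm} :
      NStepTm β (.clos u (.lam U)) (.lam (.clos (.cons (.comp .pi u) .one) U))
  | app {β : Bool} {u : NSub} {U V : NTm} :
      NStepTm β (.clos u (.app U V)) (.app (.clos u U) (.clos u V))
  | consVar {β : Bool} {u : NSub} {V : NTm} : NStepTm β (.clos (.cons u V) .one) V
  | idVar {β : Bool} : NStepTm β (.clos .id .one) .one
  | clos {β : Bool} {u v : NSub} {U : NTm} :
      NStepTm β (.clos u (.clos v U)) (.clos (.comp u v) U)
  | lamCong {β : Bool} {U₁ U₂ : NTm} : NStepTm β U₁ U₂ → NStepTm β (.lam U₁) (.lam U₂)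
  | appL {β : Bool} {U₁ U₂ V : NTm} : NStepTm β U₁ U₂ → NStepTm β (.app U₁ V) (.app U₂ V)
  | appR {β : Bool} {U V₁ V₂ : NTm} : NStepTm β V₁ V₂ → NStepTm β (.app U V₁) (.app U V₂)
  | closL {β : Bool} {u₁ u₂ : NSub} {U : NTm} :
      NStepSub β u₁ u₂ → NStepTm β (.clos u₁ U) (.clos u₂ U)
  | closR {β : Bool} {u : NSub} {U₁ U₂ : NTm} :
      NStepTm β U₁ U₂ → NStepTm β (.clos u U₁) (.clos u U₂)
inductive NStepSub : Bool → NSub → NSub → Prop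
  | ass {β : Bool} {u v w : NSub} : NStepSub β (.comp u (.comp v w)) (.comp (.comp u v) w)
  | idR {β : Bool} {u : NSub} : NStepSub β (.comp u .id) u
  | idShift {β : Bool} : NStepSub β (.comp .id .pi) .pi
  | consShift {β : Bool} {u : NSub} {V : NTm} : NStepSub β (.comp (.cons u V) .pi) u
  | map {β : Bool} {u v : NSub} {V : NTm} :
      NStepSub β (.comp u (.cons v V)) (.cons (.comp u v) (.clos u V))
  | consL {β : Bool} {u₁ u₂ : NSub} {V : NTm} :
      NStepSub β u₁ u₂ → NStepSub β (.cons u₁ V) (.cons u₂ V)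
  | consR {β : Bool} {u : NSub} {V₁ V₂ : NTm} :
      NStepTm β V₁ V₂ → NStepSub β (.cons u V₁) (.cons u V₂)
  | compL {β : Bool} {u₁ u₂ v : NSub} :
      NStepSub β u₁ u₂ → NStepSub β (.comp u₁ v) (.comp u₂ v)
  | compR {β : Bool} {u v₁ v₂ : NSub} :
      NStepSub β v₁ v₂ → NStepSub β (.comp u v₁) (.comp u v₂)
end

/- The correspondence `(Γ ⊢ M) ⟹ U` resp. `(Γ ⊢ s ▷ Δ) ⟹ u` between judgements and
name-free terms/substitutions (Definition 7.6 of the paper). -/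
mutual
inductive TrTm : List ℕ → Tm → NTm → Prop
  | var (Γ : List ℕ) (a : ℕ) : TrTm (a :: Γ) (.var a) (dbr 0)
  | weak {Γ : List ℕ} {a : ℕ} {n : ℕ} (b : ℕ) : a ≠ b →
      TrTm Γ (.var a) (dbr n) → TrTm (b :: Γ) (.var a) (dbr (n + 1))
  | app {Γ M N U V} : TrTm Γ M U → TrTm Γ N V → TrTm Γ (.app M N) (.app U V)
  | lam {Γ a M U} : TrTm (a :: Γ) M U → TrTm Γ (.lam a M) (.lam U)
  | clos {Γ s Δ M u U} : TrSub Γ s Δ u → TrTm Δ M U → TrTm Γ (.clos s M) (.clos u U)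
inductive TrSub : List ℕ → Subst → List ℕ → NSub → Prop
  | id (Γ) : TrSub Γ .id Γ .id
  | pi (Γ a) : TrSub (a :: Γ) (.pi a) Γ .pi
  | cons {Γ s Δ N u V} (a) : TrSub Γ s Δ u → TrTm Γ N V →
      TrSub Γ (.cons s N a) (a :: Δ) (.cons u V)
  | comp {Γ s Δ q Θ u v} : TrSub Γ s Δ u → TrSub Δ q Θ v →
      TrSub Γ (.comp s q) Θ (.comp u v)
end

/-- Left-nested compositions `(…((π_{a₁}∘π_{a₂})∘…)∘π_{a_n}` with `n ≥ 1`. -/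
inductive IsPiComp : Subst → Prop
  | single (a : ℕ) : IsPiComp (.pi a)
  | comp {s : Subst} (a : ℕ) : IsPiComp s → IsPiComp (.comp s (.pi a))

/-- Substitutions of the form `⟨r, N₁\b₁, …, N_k\b_k⟩` with `k ≥ 1`, where `r` is `id`
or a left-nested composition of `π`'s. -/
inductive IsConsChain : Subst → Prop
  | base {s : Subst} {N : Tm} {b : ℕ} : (s = Subst.id ∨ IsPiComp s) →
      IsConsChain (.cons s N b)
  | cons {s : Subst} {N : Tm} {b : ℕ} : IsConsChain s → IsConsChain (.cons s N b)

/-- The four shapes (i)–(iv) of σπα-normal substitutions. -/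
def NFShape (s : Subst) : Prop := s = Subst.id ∨ IsPiComp s ∨ IsConsChain s

/-- A term is pure iff it contains no subterm of the shape `s∘N`. -/
def PureTm : Tm → Prop
  | .var _ => True
  | .app M N => PureTm M ∧ PureTm N
  | .lam _ M => PureTm M
  | .clos _ _ => False

/-- `PiChainEnd s b`: `s` is a left-nested composition of `π`'s whose rightmost factor
is `π_b`, i.e. `s = ((…(π_{a₁}∘…)∘π_{a_m})∘π_b` with `m ≥ 0`. -/
inductive PiChainEnd : Subst → ℕ → Prop
  | single (b : ℕ) : PiChainEnd (.pi b) b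
  | comp {s : Subst} (b : ℕ) : IsPiComp s → PiChainEnd (.comp s (.pi b)) b

/-- Terms constructed from variables and blocks `((…((π_{a₁}∘π_{a₂})∘…)∘π_b)∘b`
(with `m ≥ 0` factors before `π_b`) using application and abstraction only. -/
inductive FromBlocks : Tm → Prop
  | var (a : ℕ) : FromBlocks (.var a)
  | block {s : Subst} {b : ℕ} : PiChainEnd s b → FromBlocks (.clos s (.var b))
  | app {M N : Tm} : FromBlocks M → FromBlocks N → FromBlocks (.app M N)
  | lam {M : Tm} (a : ℕ) : FromBlocks M → FromBlocks (.lam a M)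

/- The compatible closure of the single rule α₁ on terms and substitutions. -/
mutual
inductive A1Tm : Tm → Tm → Prop
  | alpha1 {a b : ℕ} {M : Tm} :
      (∃ i, a ∈ FV (.lam a M) i) → (∀ i, b ∉ FV (.lam a M) i) →
      A1Tm (.lam a M) (.lam b (.clos (.cons (.pi b) (.var b) a) M))
  | lamCong {a : ℕ} {M₁ M₂ : Tm} : A1Tm M₁ M₂ → A1Tm (.lam a M₁) (.lam a M₂)
  | appL {M₁ M₂ N : Tm} : A1Tm M₁ M₂ → A1Tm (.app M₁ N) (.app M₂ N)
  | appR {M N₁ N₂ : Tm} : A1Tm N₁ N₂ → A1Tm (.app M N₁) (.app M N₂)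
  | closL {s₁ s₂ : Subst} {M : Tm} : A1Sub s₁ s₂ → A1Tm (.clos s₁ M) (.clos s₂ M)
  | closR {s : Subst} {M₁ M₂ : Tm} : A1Tm M₁ M₂ → A1Tm (.clos s M₁) (.clos s M₂)
inductive A1Sub : Subst → Subst → Prop
  | consL {s₁ s₂ : Subst} {N : Tm} {a : ℕ} : A1Sub s₁ s₂ → A1Sub (.cons s₁ N a) (.cons s₂ N a)
  | consR {s : Subst} {N₁ N₂ : Tm} {a : ℕ} : A1Tm N₁ N₂ → A1Sub (.cons s N₁ a) (.cons s N₂ a)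
  | compL {s₁ s₂ q : Subst} : A1Sub s₁ s₂ → A1Sub (.comp s₁ q) (.comp s₂ q)
  | compR {s q₁ q₂ : Subst} : A1Sub q₁ q₂ → A1Sub (.comp s q₁) (.comp s q₂)
end

/-!
A binder `λa` cancels a shift `π_a`: `O_{λa} ∘ O_π` is the identity. If `Γ ⊢ s ▷ Θ` for a
composition `s` of `π`'s, then `Γ = Δ ++ Θ`, where `Δ` lists the variables of those `π`'s, and
abstracting `s∘M` over `Δ` restores `FV(M)`. Hence in a block `s∘b` whose last factor is `π_b`, the
variable `b` is free in `λΔ.(s∘b)` although the outermost binder of `λΔ` is `b` itself, which is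
the clash that α-renaming repairs. Clashes survive passing from a subterm to an application, and an
abstraction either inherits the clash of its body in the surrounding context or is itself an
`α₁`-redex. A fresh name to rename to always exists, since a term has finitely many free variables.
-/

section Freshness

theorem iUnion_Olam_subset (a : ℕ) (A : ℕ → Finset ℕ) :
    ⋃ i, (Olam a A i : Set ℕ) ⊆ ⋃ i, (A i : Set ℕ) := by
  refine Set.iUnion_subset fun i x hx => ?_
  rw [Set.mem_iUnion]
  cases i with
  | zero =>
    rcases Finset.mem_union.mp hx with hx | hx
    · exact ⟨0, Finset.mem_of_mem_erase hx⟩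
    · exact ⟨1, hx⟩
  | succ n => exact ⟨n + 2, hx⟩

theorem iUnion_Opi_subset (A : ℕ → Finset ℕ) :
    ⋃ i, (Opi A i : Set ℕ) ⊆ ⋃ i, (A i : Set ℕ) := by
  refine Set.iUnion_subset fun i => ?_
  cases i with
  | zero => simp only [Opi, Finset.coe_empty, Set.empty_subset]
  | succ n => exact Set.subset_iUnion (fun i => (A i : Set ℕ)) n

mutual

theorem finite_iUnion_FV : ∀ M : Tm, (⋃ i, (FV M i : Set ℕ)).Finite
  | .var a => by
    refine (Set.finite_singleton a).subset (Set.iUnion_subset fun i => ?_)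
    simp only [FV]
    split_ifs <;> simp
  | .app M N => by
    simp only [FV, Finset.coe_union, Set.iUnion_union_distrib]
    exact (finite_iUnion_FV M).union (finite_iUnion_FV N)
  | .lam a M => (finite_iUnion_FV M).subset (iUnion_Olam_subset a (FV M))
  | .clos s M => finite_iUnion_Osub s (finite_iUnion_FV M)

theorem finite_iUnion_Osub : ∀ (s : Subst) {A : ℕ → Finset ℕ},
    (⋃ i, (A i : Set ℕ)).Finite → (⋃ i, (Osub s A i : Set ℕ)).Finite
  | .id, _, hA => hA
  | .pi _, A, hA => hA.subset (iUnion_Opi_subset A)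
  | .cons s N a, A, hA => by
    simp only [Osub, Finset.coe_union, Set.iUnion_union_distrib]
    exact (finite_iUnion_Osub s (hA.subset (iUnion_Olam_subset a A))).union (finite_iUnion_FV N)
  | .comp s q, _, hA => finite_iUnion_Osub s (finite_iUnion_Osub q hA)

end

theorem exists_forall_notMem_FV (M : Tm) : ∃ b, ∀ i, b ∉ FV M i := by
  obtain ⟨b, hb⟩ := (finite_iUnion_FV M).exists_notMem
  exact ⟨b, fun i hi => hb (Set.mem_iUnion.mpr ⟨i, hi⟩)⟩

theorem exists_A1Tm_lam {a i : ℕ} {M : Tm} (ha : a ∈ FV (.lam a M) i) :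
    ∃ M', A1Tm (.lam a M) M' :=
  let ⟨_, hb⟩ := exists_forall_notMem_FV (.lam a M)
  ⟨_, .alpha1 ⟨i, ha⟩ hb⟩

end Freshness

section Judgements

theorem Olam_mono (a : ℕ) : Monotone (Olam a) := by
  intro A B hAB i
  cases i with
  | zero => exact Finset.union_subset_union (Finset.erase_subset_erase a (hAB 0)) (hAB 1)
  | succ n => exact hAB (n + 2)

theorem FVJ_mono {M N : Tm} (Γ : List ℕ) (h : FV M ≤ FV N) : FVJ Γ M ≤ FVJ Γ N := by
  induction Γ generalizing M N with
  | nil => exact h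
  | cons a _ ih => exact ih (Olam_mono a h)

theorem FVJ_congr {M N : Tm} (Γ : List ℕ) (h : FV M = FV N) : FVJ Γ M = FVJ Γ N :=
  (FVJ_mono Γ h.le).antisymm (FVJ_mono Γ h.ge)

theorem FVJ_concat (Γ : List ℕ) (a : ℕ) (M : Tm) :
    FVJ (Γ ++ [a]) M = Olam a (FVJ Γ M) := by
  induction Γ generalizing M with
  | nil => rfl
  | cons b _ ih => exact ih (.lam b M)

end Judgements

section PiCompositions

theorem Olam_Opi (a : ℕ) (A : ℕ → Finset ℕ) : Olam a (Opi A) = A := by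
  funext i
  cases i <;> simp [Olam, Opi]

theorem FVJ_singleton_clos_pi (a : ℕ) (M : Tm) : FVJ [a] (.clos (.pi a) M) = FV M :=
  Olam_Opi a (FV M)

theorem FVJ_concat_clos_comp_pi {Δ : List ℕ} {s : Subst}
    (hs : ∀ M, FVJ Δ (.clos s M) = FV M) (a : ℕ) (M : Tm) :
    FVJ (Δ ++ [a]) (.clos (.comp s (.pi a)) M) = FV M :=
  calc FVJ (Δ ++ [a]) (.clos (.comp s (.pi a)) M)
      = Olam a (FVJ Δ (.clos (.comp s (.pi a)) M)) := FVJ_concat Δ a _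
    _ = Olam a (FVJ Δ (.clos s (.clos (.pi a) M))) := congrArg (Olam a) (FVJ_congr Δ rfl)
    _ = Olam a (Opi (FV M)) := congrArg (Olam a) (hs _)
    _ = FV M := Olam_Opi a (FV M)

theorem IsPiComp.exists_FVJ_clos_eq {s : Subst} {Γ Θ : List ℕ} (hs : IsPiComp s)
    (h : WfSub Γ s Θ) : ∃ Δ, Γ = Δ ++ Θ ∧ ∀ M, FVJ Δ (.clos s M) = FV M := by
  induction hs generalizing Θ with
  | single a =>
    cases h
    exact ⟨[a], rfl, FVJ_singleton_clos_pi a⟩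
  | comp a _ ih =>
    cases h with | comp hs hπ =>
    cases hπ
    obtain ⟨Δ, rfl, hΔ⟩ := ih hs
    exact ⟨Δ ++ [a], List.append_cons .., FVJ_concat_clos_comp_pi hΔ a⟩

theorem PiChainEnd.exists_FVJ_clos_eq {s : Subst} {b : ℕ} {Γ Θ : List ℕ} (hs : PiChainEnd s b)
    (h : WfSub Γ s Θ) : ∃ Δ, Γ = Δ ++ b :: Θ ∧ ∀ M, FVJ (Δ ++ [b]) (.clos s M) = FV M := by
  cases hs with
  | single =>
    cases h
    exact ⟨[], rfl, FVJ_singleton_clos_pi b⟩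
  | comp _ hpi =>
    cases h with | comp hs hπ =>
    cases hπ
    obtain ⟨Δ, rfl, hΔ⟩ := hpi.exists_FVJ_clos_eq hs
    exact ⟨Δ, rfl, FVJ_concat_clos_comp_pi hΔ b⟩

end PiCompositions

section Clashes

/-- Some entry `a` of the context `Γ` occurs free in the abstraction of `M` over `a` and the
entries to its right. This is the condition of `α₂` on the variable to be renamed; the existence
of a fresh name is left out because it holds for every term. -/
def HasClash (Γ : List ℕ) (M : Tm) : Prop :=
  ∃ (Γ₀ Δ : List ℕ) (a : ℕ), Γ = Δ ++ a :: Γ₀ ∧ ∃ i, a ∈ FVJ (Δ ++ [a]) M i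

theorem HasClash.mono {Γ : List ℕ} {M N : Tm} (hMN : FV M ≤ FV N) :
    HasClash Γ M → HasClash Γ N
  | ⟨Γ₀, Δ, a, hΓ, i, hi⟩ => ⟨Γ₀, Δ, a, hΓ, i, FVJ_mono (Δ ++ [a]) hMN i hi⟩

theorem hasClash_cons {a : ℕ} {Γ : List ℕ} {M : Tm} :
    HasClash (a :: Γ) M ↔ (∃ i, a ∈ FV (.lam a M) i) ∨ HasClash Γ (.lam a M) := by
  constructor
  · rintro ⟨Γ₀, _ | ⟨c, Δ⟩, d, hΓ, hd⟩
    · obtain ⟨rfl, rfl⟩ := List.cons_eq_cons.mp hΓ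
      exact .inl hd
    · obtain ⟨rfl, rfl⟩ := List.cons_eq_cons.mp hΓ
      exact .inr ⟨Γ₀, Δ, d, rfl, hd⟩
  · rintro (ha | ⟨Γ₀, Δ, d, rfl, hd⟩)
    · exact ⟨Γ, [], a, rfl, ha⟩
    · exact ⟨Γ₀, a :: Δ, d, rfl, hd⟩

theorem PiChainEnd.hasClash_clos {s : Subst} {b i : ℕ} {Γ Θ : List ℕ} {M : Tm}
    (hs : PiChainEnd s b) (h : WfSub Γ s Θ) (hb : b ∈ FV M i) : HasClash Γ (.clos s M) := by
  obtain ⟨Δ, hΓ, hΔ⟩ := hs.exists_FVJ_clos_eq h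
  exact ⟨Θ, Δ, b, hΓ, i, (hΔ M).symm ▸ hb⟩

theorem FromBlocks.pure_or_A1Tm_or_hasClash {Γ : List ℕ} {M : Tm} (hfb : FromBlocks M)
    (h : WfTm Γ M) : PureTm M ∨ (∃ M', A1Tm M M') ∨ HasClash Γ M := by
  induction hfb generalizing Γ with
  | var a => exact .inl trivial
  | @block _ b hs =>
    cases h with | clos hsub _ =>
    have hb : b ∈ FV (.var b) 0 := Finset.mem_singleton_self b
    exact .inr (.inr (hs.hasClash_clos hsub hb))
  | app _ _ ihM ihN =>
    cases h with | app hM hN =>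
    rcases ihM hM with pureM | ⟨_, stepM⟩ | clashM
    · rcases ihN hN with pureN | ⟨_, stepN⟩ | clashN
      · exact .inl ⟨pureM, pureN⟩
      · exact .inr (.inl ⟨_, .appR stepN⟩)
      · exact .inr (.inr (clashN.mono fun _ => Finset.subset_union_right))
    · exact .inr (.inl ⟨_, .appL stepM⟩)
    · exact .inr (.inr (clashM.mono fun _ => Finset.subset_union_left))
  | lam a _ ih =>
    cases h with | lam hM =>
    rcases ih hM with pureM | ⟨_, stepM⟩ | clashM
    · exact .inl pureM
    · exact .inr (.inl ⟨_, .lamCong stepM⟩)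
    · rcases hasClash_cons.mp clashM with ⟨_, ha⟩ | clashLam
      · exact .inr (.inl (exists_A1Tm_lam ha))
      · exact .inr (.inr clashLam)

end Clashes

/-- a derivable term built from variables and π-blocks by application and
abstraction is pure, or α₁ applies to the term, or α₂ applies to the judgement. -/
theorem blocks_pure_or_alpha {Γ : List ℕ} {M : Tm}
    (h : WfTm Γ M) (hfb : FromBlocks M) :
    PureTm M ∨ (∃ M' : Tm, A1Tm M M') ∨
      (∃ (Γ₀ Δ : List ℕ) (a b : ℕ), Γ = Δ ++ a :: Γ₀ ∧
        (∃ i, a ∈ FVJ (Δ ++ [a]) M i) ∧ (∀ i, b ∉ FVJ (Δ ++ [a]) M i)) := by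
  rcases hfb.pure_or_A1Tm_or_hasClash h with hpure | hstep | ⟨Γ₀, Δ, a, hΓ, ha⟩
  · exact .inl hpure
  · exact .inr (.inl hstep)
  · obtain ⟨b, hb⟩ := exists_forall_notMem_FV (lamCtx (Δ ++ [a]) M)
    exact .inr (.inr ⟨Γ₀, Δ, a, b, hΓ, ha, hb⟩)
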